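/- arXiv:0910.3573 — 2 statements merged into one kernel-verified Lean document; each statement's English description precedes it below -/
import Mathlib

section
/- Assume that the continuity equation d/dt w_t + ∇·(b_t w_t) = 0 has uniqueness in L∞₊([0,T]; L¹(ℝ^d) ∩ L∞(ℝ^d)). Let f, g ∈ L¹(ℝ^d) ∩ L∞(ℝ^d) be nonnegative, let X be an (f·L^d)-regular Lagrangian flow and Y a (g·L^d)-regular Lagrangian flow, both relative to b. Then X(·,x) = Y(·,x) on [0,T] for L^d-a.e. x in {f > 0} ∩ {g > 0}. -/
open MeasureTheory Set Filter Metric Function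
open scoped ENNReal NNReal Topology

noncomputable section

instance {Ω : Type*} [MeasurableSpace Ω] : MeasurableSpace (ProbabilityMeasure Ω) :=
  Subtype.instMeasurableSpace

variable {E : Type*} [NormedAddCommGroup E] [NormedSpace ℝ E] [MeasureSpace E]

/-- A curve of measures solves the continuity equation `d/dt μ_t + ∇·(b_t μ_t) = 0`
in the sense of distributions on `(0,T) × ℝ^d`. -/
def SolvesContinuityEquation (b : ℝ → E → E) (T : ℝ) (μ : ℝ → Measure E) : Prop :=
  ∀ φ : E → ℝ, ContDiff ℝ (⊤ : ℕ∞) φ → HasCompactSupport φ →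
  ∀ ψ : ℝ → ℝ, ContDiff ℝ (⊤ : ℕ∞) ψ → HasCompactSupport ψ → tsupport ψ ⊆ Ioo 0 T →
  ∫ t in Ioo 0 T,
      (deriv ψ t * ∫ x, φ x ∂(μ t) + ψ t * ∫ x, (fderiv ℝ φ x) (b t x) ∂(μ t)) = 0

/-- Weak-* continuity of a curve of measures on `[0,T]`. -/
def WeaklyContinuous (T : ℝ) (μ : ℝ → Measure E) : Prop :=
  ∀ φ : E → ℝ, Continuous φ → HasCompactSupport φ →
    ContinuousOn (fun t => ∫ x, φ x ∂(μ t)) (Icc 0 T)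

/-- Membership in the class `L∞₊([0,T]; L¹ ∩ L∞)`, phrased for the measures `μ t = w t · L^d`:
uniformly finite mass (`L¹`) and uniformly bounded density (`L∞`, nonnegativity is automatic). -/
def InL1LinftyClass (T : ℝ) (μ : ℝ → Measure E) : Prop :=
  ∃ C : ℝ≥0, ∀ t ∈ Icc 0 T, μ t Set.univ ≤ (C : ℝ≥0∞) ∧ μ t ≤ C • (volume : Measure E)

/-- Uniqueness for the continuity equation in `L∞₊([0,T]; L¹ ∩ L∞)`. -/
def CEUniqueness (b : ℝ → E → E) (T : ℝ) : Prop :=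
  ∀ μ₁ μ₂ : ℝ → Measure E, InL1LinftyClass T μ₁ → InL1LinftyClass T μ₂ →
    WeaklyContinuous T μ₁ → WeaklyContinuous T μ₂ →
    SolvesContinuityEquation b T μ₁ → SolvesContinuityEquation b T μ₂ →
    μ₁ 0 = μ₂ 0 → ∀ t ∈ Icc 0 T, μ₁ t = μ₂ t

/-- Existence for the continuity equation in `L∞₊([0,T]; L¹ ∩ L∞)`. -/
def CEExistence (b : ℝ → E → E) (T : ℝ) : Prop :=
  ∀ ν : Measure E, (∃ C : ℝ≥0, ν Set.univ ≤ (C : ℝ≥0∞) ∧ ν ≤ C • (volume : Measure E)) →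
    ∃ μ : ℝ → Measure E, μ 0 = ν ∧ InL1LinftyClass T μ ∧ WeaklyContinuous T μ ∧
      SolvesContinuityEquation b T μ

/-- `X` is a `ν`-regular Lagrangian flow relative to `b`:
(i) for `ν`-a.e. `x`, `t ↦ X t x` is an absolutely continuous integral solution of the ODE
`Ẋ = b_t(X)` on `[0,T]` with `X 0 x = x`;
(ii) `X(t,·)_♯ ν ≤ C · L^d` for all `t ∈ [0,T]`. -/
def IsRLF (b : ℝ → E → E) (T : ℝ) (ν : Measure E) (X : ℝ → E → E) : Prop :=
  (∀ᵐ x ∂ν,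
      X 0 x = x ∧
      IntegrableOn (fun s => b s (X s x)) (Icc 0 T) ∧
      ∀ t ∈ Icc 0 T, X t x = x + ∫ s in (0:ℝ)..t, b s (X s x)) ∧
  (∀ t ∈ Icc 0 T, AEMeasurable (X t) ν) ∧
  ∃ C : ℝ≥0, ∀ t ∈ Icc 0 T, Measure.map (X t) ν ≤ C • (volume : Measure E)

/-- `b` is Borel and locally integrable on `[0,T] × ℝ^d`. -/
def BorelLocIntegrable (b : ℝ → E → E) (T : ℝ) : Prop :=
  Measurable (Function.uncurry b) ∧
  ∀ R : ℝ, IntegrableOn (Function.uncurry b) (Icc 0 T ×ˢ Metric.closedBall (0 : E) R)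

/-- The expectation `E𝛎 ∈ M₊(ℝ^d)` of a measure `𝛎` on `P(ℝ^d)`:
`∫ φ d(E𝛎) = ∫ (∫ φ dμ) d𝛎(μ)`. -/
def expectation {Ω : Type*} [MeasurableSpace Ω] (ν : Measure (ProbabilityMeasure Ω)) :
    Measure Ω :=
  ν.bind fun μ => (μ : Measure Ω)

/-- A measure `𝛎` on `P(ℝ^d)` is regular if `E𝛎 ≤ C · L^d` for some constant `C`. -/
def IsRegularOnP (ν : Measure (ProbabilityMeasure E)) : Prop :=
  ∃ C : ℝ≥0, expectation ν ≤ C • (volume : Measure E)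

/-- `M` is a `𝛎`-regular Lagrangian flow in `P(ℝ^d)` relative to `b`:
(i) for `𝛎`-a.e. `μ`, `|b| ∈ L¹_loc((0,T) × ℝ^d; μ_t dt)`, `t ↦ M t μ` is weakly continuous,
starts at `μ`, and solves the continuity equation distributionally;
(ii) `E(M(t,·)_♯ 𝛎) ≤ C · L^d` for all `t ∈ [0,T]`. -/
def IsMeasureRLF (b : ℝ → E → E) (T : ℝ) (ν : Measure (ProbabilityMeasure E))
    (M : ℝ → ProbabilityMeasure E → ProbabilityMeasure E) : Prop :=
  (∀ᵐ μ ∂ν,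
      M 0 μ = μ ∧
      (∀ R > (0:ℝ), ∀ a c : ℝ, 0 < a → c < T →
        ∫⁻ t in Icc a c,
          ∫⁻ x in Metric.closedBall (0 : E) R, ‖b t x‖₊ ∂(M t μ : Measure E) ≠ ⊤) ∧
      (∀ φ : E → ℝ, Continuous φ → HasCompactSupport φ →
        ContinuousOn (fun t => ∫ x, φ x ∂(M t μ : Measure E)) (Icc 0 T)) ∧
      SolvesContinuityEquation b T (fun t => (M t μ : Measure E))) ∧
  (∀ t ∈ Icc 0 T, AEMeasurable (M t) ν) ∧
  ∃ C : ℝ≥0, ∀ t ∈ Icc 0 T,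
    expectation (Measure.map (M t) ν) ≤ C • (volume : Measure E)

/-!
Let `κ = min(f, g) · L^d`, or a finite piece of it when it is not finite. Both flows are regular
with respect to every restriction `κ|_A`, and the curves `t ↦ X(t,·)_♯ κ|_A` and
`t ↦ Y(t,·)_♯ κ|_A` are weakly continuous solutions of the continuity equation in `L∞₊(L¹ ∩ L∞)`
starting from `κ|_A`, so uniqueness makes them equal. Since `A` is arbitrary, `X(t,·) = Y(t,·)`
holds `κ`-a.e. for each `t` (take `A` to be the preimage of a set `B` under `X(t,·)`), and
continuity in time allows the null set to be chosen independently of `t`.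
-/

theorem absolutelyContinuousOnInterval_of_dist_le_mul {F G : Type*} [PseudoMetricSpace F]
    [PseudoMetricSpace G] {f : ℝ → F} {g : ℝ → G} {a c : ℝ}
    (hg : AbsolutelyContinuousOnInterval g a c) (K : ℝ)
    (h : ∀ s ∈ uIcc a c, ∀ t ∈ uIcc a c, dist (f s) (f t) ≤ K * dist (g s) (g t)) :
    AbsolutelyContinuousOnInterval f a c := by
  refine squeeze_zero' (Eventually.of_forall fun _ => Finset.sum_nonneg fun _ _ => dist_nonneg)
    ?_ (by simpa only [mul_zero] using Tendsto.const_mul K hg)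
  refine eventually_inf_principal.2 (Eventually.of_forall fun I hI => ?_)
  rw [Finset.mul_sum]
  exact Finset.sum_le_sum fun i hi => h _ (hI.1 i hi).1 _ (hI.1 i hi).2

theorem absolutelyContinuousOnInterval_lipschitz_comp_primitive {F G : Type*}
    [NormedAddCommGroup F] [NormedSpace ℝ F] [PseudoMetricSpace G] {β : ℝ → F} {φ : F → G}
    {K : ℝ≥0} {a c : ℝ} (hφ : LipschitzWith K φ) (hβ : IntervalIntegrable β volume a c) (x : F) :
    AbsolutelyContinuousOnInterval (fun t => φ (x + ∫ s in a..t, β s)) a c := by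
  refine absolutelyContinuousOnInterval_of_dist_le_mul
    (hβ.norm.absolutelyContinuousOnInterval_intervalIntegral left_mem_uIcc) K fun s hs t ht => ?_
  have hβ_to : ∀ r ∈ uIcc a c, IntervalIntegrable β volume a r := fun r hr =>
    hβ.mono_set (uIcc_subset_uIcc left_mem_uIcc hr)
  refine (hφ.dist_le_mul _ _).trans (mul_le_mul_of_nonneg_left ?_ K.coe_nonneg)
  rw [dist_add_left, dist_eq_norm, dist_eq_norm,
    intervalIntegral.integral_interval_sub_left (hβ_to s hs) (hβ_to t ht),
    intervalIntegral.integral_interval_sub_left (hβ_to s hs).norm (hβ_to t ht).norm]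
  exact intervalIntegral.norm_integral_le_abs_integral_norm

theorem integral_deriv_mul_add_mul_fderiv_comp_eq_zero {F : Type*} [NormedAddCommGroup F]
    [NormedSpace ℝ F] [CompleteSpace F] {β γ : ℝ → F} {x : F} {φ : F → ℝ} {ψ : ℝ → ℝ} {K : ℝ≥0}
    {a c : ℝ} (hβ : IntervalIntegrable β volume a c)
    (hγ : ∀ t ∈ uIcc a c, γ t = x + ∫ s in a..t, β s)
    (hφ : Differentiable ℝ φ) (hφK : LipschitzWith K φ)
    (hψ : AbsolutelyContinuousOnInterval ψ a c) (hψa : ψ a = 0) (hψc : ψ c = 0) :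
    ∫ t in a..c, (deriv ψ t * φ (γ t) + ψ t * fderiv ℝ φ (γ t) (β t)) = 0 := by
  have chain_rule : ∀ᵐ t, t ∈ uIcc a c → deriv (fun t => φ (x + ∫ s in a..t, β s)) t =
      fderiv ℝ φ (x + ∫ s in a..t, β s) (β t) := by
    filter_upwards [hβ.ae_hasDerivAt_integral] with t hderiv ht
    exact ((hφ _).hasFDerivAt.comp_hasDerivAt t
      ((hderiv ht a left_mem_uIcc).const_add x)).deriv
  have by_parts := hψ.integral_deriv_mul_eq_sub
    (absolutelyContinuousOnInterval_lipschitz_comp_primitive hφK hβ x)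
  rw [hψa, hψc, zero_mul, zero_mul, sub_zero] at by_parts
  rw [← by_parts]
  refine intervalIntegral.integral_congr_ae ?_
  filter_upwards [chain_rule] with t hchain ht
  rw [hchain (uIoc_subset_uIcc ht), hγ t (uIoc_subset_uIcc ht)]

theorem aemeasurable_uncurry_of_ae_continuousOn {ι α β : Type*} [EMetricSpace ι]
    [MeasurableSpace ι] [OpensMeasurableSpace ι] [MeasurableSpace α] [TopologicalSpace β]
    [TopologicalSpace.PseudoMetrizableSpace β] [MeasurableSpace β] [BorelSpace β] {s : Set ι}
    [TopologicalSpace.SeparableSpace s] {ρ : Measure ι} {μ : Measure α} [SFinite μ]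
    {u : ι → α → β} (hs : MeasurableSet s) (hu : ∀ i ∈ s, AEMeasurable (u i) μ)
    (hcont : ∀ᵐ x ∂μ, ContinuousOn (u · x) s) :
    AEMeasurable (uncurry u) ((ρ.restrict s).prod μ) := by
  rcases s.eq_empty_or_nonempty with rfl | ⟨i₀, hi₀⟩
  · simp
  let approx := SimpleFunc.approxOn (id : ι → ι) measurable_id s i₀ hi₀
  have approx_mem : ∀ n i, approx n i ∈ s := SimpleFunc.approxOn_mem measurable_id hi₀
  refine aemeasurable_of_tendsto_metrizable_ae atTop
    (f := fun n (p : ι × α) => u (approx n p.1) p.2) (fun n => ?_) ?_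
  · have hu_mem : ∀ i : (approx n).range, AEMeasurable (u i) μ := by
      rintro ⟨i, hi⟩
      obtain ⟨j, rfl⟩ := SimpleFunc.mem_range.1 hi
      exact hu _ (approx_mem n j)
    have version_measurable :
        Measurable fun q : (approx n).range × α => (hu_mem q.1).mk _ q.2 :=
      measurable_from_prod_countable_right fun i => (hu_mem i).measurable_mk
    have approx_measurable : Measurable fun p : ι × α =>
        ((⟨approx n p.1, SimpleFunc.mem_range_self _ _⟩ : (approx n).range), p.2) :=
      (((approx n).measurable.comp measurable_fst).subtype_mk).prodMk measurable_snd
    refine ⟨_, version_measurable.comp approx_measurable, ?_⟩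
    filter_upwards [Measure.quasiMeasurePreserving_snd.ae
      (ae_all_iff.2 fun i => (hu_mem i).ae_eq_mk)] with p hp
    exact hp ⟨approx n p.1, _⟩
  · filter_upwards [Measure.quasiMeasurePreserving_snd.ae hcont,
      Measure.quasiMeasurePreserving_fst.ae (ae_restrict_mem hs)] with p hp hps
    exact (hp p.1 hps).tendsto.comp (tendsto_nhdsWithin_iff.2
      ⟨SimpleFunc.tendsto_approxOn measurable_id hi₀ (subset_closure hps),
        Eventually.of_forall fun n => approx_mem n p.1⟩)

theorem map_prodMk_le_smul_prod {ι α β : Type*} [MeasurableSpace ι] [MeasurableSpace α]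
    [MeasurableSpace β] {ρ : Measure ι} {μ : Measure α} {κ : Measure β} [SFinite μ] [SFinite κ]
    {u : ι → α → β} {C : ℝ≥0} (hu : AEMeasurable (uncurry u) (ρ.prod μ))
    (hslice : ∀ᵐ i ∂ρ, Measure.map (u i) μ ≤ C • κ) :
    Measure.map (fun p : ι × α => (p.1, u p.1 p.2)) (ρ.prod μ) ≤ C • ρ.prod κ := by
  obtain ⟨v, hv, huv⟩ := hu
  have hgraph : Measurable fun p : ι × α => (p.1, v p) := measurable_fst.prodMk hv
  have hslice_v : ∀ᵐ i ∂ρ, Measure.map (fun x => v (i, x)) μ ≤ C • κ := by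
    filter_upwards [hslice, Measure.ae_ae_of_ae_prod huv] with i hi huv_i
    rwa [← Measure.map_congr huv_i]
  refine Measure.le_iff.2 fun S hS => ?_
  calc Measure.map (fun p : ι × α => (p.1, u p.1 p.2)) (ρ.prod μ) S
      = Measure.map (fun p : ι × α => (p.1, v p)) (ρ.prod μ) S := by
        have hgraph_eq : (fun p : ι × α => (p.1, u p.1 p.2)) =ᵐ[ρ.prod μ] fun p => (p.1, v p) :=
          huv.mono fun p hp => congrArg (Prod.mk p.1) hp
        rw [Measure.map_congr hgraph_eq]
    _ = ∫⁻ i, Measure.map (fun x => v (i, x)) μ (Prod.mk i ⁻¹' S) ∂ρ := by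
        rw [Measure.map_apply hgraph hS, Measure.prod_apply (hgraph hS)]
        exact lintegral_congr fun i =>
          (Measure.map_apply (hv.comp measurable_prodMk_left) (measurable_prodMk_left hS)).symm
    _ ≤ ∫⁻ i, C * κ (Prod.mk i ⁻¹' S) ∂ρ :=
        lintegral_mono_ae (hslice_v.mono fun i hi => hi _)
    _ = (C • ρ.prod κ) S := by
        rw [lintegral_const_mul _ (measurable_measure_prodMk_left hS), ← Measure.prod_apply hS]
        rfl

theorem integrable_continuous_fst_mul {ι α : Type*} [TopologicalSpace ι] [MeasurableSpace ι]
    [OpensMeasurableSpace ι] [MeasurableSpace α] {ρ : Measure ι} {μ : Measure α} {η : ι → ℝ}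
    {G : ι × α → ℝ} (hη : Continuous η) (hηc : HasCompactSupport η)
    (hG : Integrable G (ρ.prod μ)) : Integrable (fun p => η p.1 * G p) (ρ.prod μ) := by
  obtain ⟨M, hM⟩ := hηc.exists_bound_of_continuous hη
  exact hG.bdd_mul (hη.measurable.comp measurable_fst).aestronglyMeasurable
    (Eventually.of_forall fun p => hM p.1)

theorem ae_eq_of_map_restrict_absolutelyContinuous {α β : Type*} [MeasurableSpace α]
    [MeasurableSpace β] [MeasurableSpace.CountablySeparated β] {κ : Measure α} {U V : α → β}
    (hU : AEMeasurable U κ) (hV : AEMeasurable V κ)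
    (h : ∀ A, MeasurableSet A → Measure.map V (κ.restrict A) ≪ Measure.map U (κ.restrict A)) :
    U =ᵐ[κ] V := by
  have mem_imp_mem : ∀ B, MeasurableSet B → ∀ᵐ x ∂κ, U x ∈ B → V x ∈ B := by
    intro B hB
    have hA : MeasurableSet (hU.mk U ⁻¹' B) := hU.measurable_mk hB
    have hUB : ∀ᵐ y ∂Measure.map U (κ.restrict (hU.mk U ⁻¹' B)), y ∈ B := by
      refine (ae_map_iff hU.restrict hB).2 ?_
      filter_upwards [ae_restrict_mem hA, ae_restrict_of_ae hU.ae_eq_mk] with x hx hmk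
      rwa [hmk]
    have hVB := (ae_map_iff hV.restrict hB).1 ((h _ hA).ae_le hUB)
    filter_upwards [(ae_restrict_iff' hA).1 hVB, hU.ae_eq_mk] with x hx hmk hUx
    exact hx (by rwa [mem_preimage, ← hmk])
  refine Filter.EventuallyEq.of_forall_separating_preimage MeasurableSet fun B hB => ?_
  filter_upwards [mem_imp_mem B hB, mem_imp_mem Bᶜ hB.compl] with x hx hx_compl
  exact propext ⟨hx, not_imp_not.1 hx_compl⟩

theorem ae_eqOn_of_forall_ae_eq {ι α β : Type*} [TopologicalSpace ι] [TopologicalSpace β]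
    [T2Space β] [MeasurableSpace α] {μ : Measure α} {s : Set ι}
    [TopologicalSpace.SeparableSpace s] {u v : ι → α → β} (h : ∀ i ∈ s, u i =ᵐ[μ] v i)
    (hu : ∀ᵐ x ∂μ, ContinuousOn (u · x) s) (hv : ∀ᵐ x ∂μ, ContinuousOn (v · x) s) :
    ∀ᵐ x ∂μ, EqOn (u · x) (v · x) s := by
  obtain ⟨D, hD_countable, hD_dense⟩ := TopologicalSpace.exists_countable_dense s
  have hD : ∀ᵐ x ∂μ, ∀ i ∈ D, u i x = v i x :=
    (ae_ball_iff hD_countable).2 fun i _ => h i i.2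
  filter_upwards [hD, hu, hv] with x hx hux hvx
  exact domRestrict_eq_domRestrict_iff.1
    (Continuous.ext_on hD_dense hux.domRestrict hvx.domRestrict hx)

section Flow

variable {b : ℝ → E → E} {T : ℝ} {ν : Measure E} {X Y : ℝ → E → E}

theorem IsRLF.mono_measure {μ : Measure E} (hX : IsRLF b T ν X) (hμ : μ ≤ ν) :
    IsRLF b T μ X := by
  obtain ⟨hcurve, hmeas, C, hC⟩ := hX
  exact ⟨(Measure.absolutelyContinuous_of_le hμ).ae_le hcurve,
    fun t ht => (hmeas t ht).mono_measure hμ, C,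
    fun t ht => (Measure.map_mono_of_aemeasurable hμ (hmeas t ht)).trans (hC t ht)⟩

theorem IsRLF.ae_continuousOn (hX : IsRLF b T ν X) :
    ∀ᵐ x ∂ν, ContinuousOn (X · x) (Icc 0 T) := by
  filter_upwards [hX.1] with x ⟨_, hint, hcurve⟩
  rcases lt_or_ge T 0 with hT | hT
  · simp only [Icc_eq_empty hT.not_ge, continuousOn_empty]
  · have hprimitive := intervalIntegral.continuousOn_primitive_interval
      (a := (0 : ℝ)) (b := T) (by rwa [uIcc_of_le hT])
    rw [uIcc_of_le hT] at hprimitive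
    exact (continuousOn_const.add hprimitive).congr hcurve

theorem IsRLF.inL1LinftyClass [IsFiniteMeasure ν] (hX : IsRLF b T ν X) :
    InL1LinftyClass T fun t => Measure.map (X t) ν := by
  obtain ⟨-, hmeas, C, hC⟩ := hX
  refine ⟨max (ν univ).toNNReal C, fun t ht => ⟨?_, (hC t ht).trans ?_⟩⟩
  · rw [Measure.map_apply_of_aemeasurable (hmeas t ht) MeasurableSet.univ, preimage_univ,
      ← ENNReal.coe_toNNReal (measure_ne_top ν univ)]
    exact ENNReal.coe_le_coe.2 (le_max_left _ _)
  · gcongr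
    exact le_max_right _ _

theorem IsRLF.weaklyContinuous [OpensMeasurableSpace E] [IsFiniteMeasure ν]
    (hX : IsRLF b T ν X) : WeaklyContinuous T fun t => Measure.map (X t) ν := by
  intro φ hφ hφc
  obtain ⟨M, hM⟩ := hφc.exists_bound_of_continuous hφ
  have integral_comp_continuousOn : ContinuousOn (fun t => ∫ x, φ (X t x) ∂ν) (Icc 0 T) := by
    refine continuousOn_of_dominated (bound := fun _ => M)
      (fun t ht => (hφ.measurable.comp_aemeasurable (hX.2.1 t ht)).aestronglyMeasurable)
      (fun t _ => Eventually.of_forall fun x => hM _) (integrable_const _) ?_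
    filter_upwards [hX.ae_continuousOn] with x hx
    exact hφ.comp_continuousOn hx
  exact integral_comp_continuousOn.congr fun t ht =>
    integral_map (hX.2.1 t ht) hφ.aestronglyMeasurable

theorem BorelLocIntegrable.integrable_clm_apply [OpensMeasurableSpace E]
    [SecondCountableTopology E] [SFinite (volume : Measure E)] {F : Type*} [NormedAddCommGroup F]
    [NormedSpace ℝ F] {L : E → E →L[ℝ] F}
    (hb : BorelLocIntegrable b T) (hL : Continuous L) (hLc : HasCompactSupport L) :
    Integrable (fun p : ℝ × E => L p.2 (b p.1 p.2)) ((volume.restrict (Icc 0 T)).prod volume) := by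
  obtain ⟨M, hM⟩ := hLc.exists_bound_of_continuous hL
  obtain ⟨R, hR⟩ := hLc.isCompact.isBounded.subset_closedBall (0 : E)
  have hLR : ∀ x ∉ closedBall (0 : E) R, L x = 0 := fun x hx =>
    image_eq_zero_of_notMem_tsupport fun h => hx (hR h)
  have hmeas : StronglyMeasurable fun p : ℝ × E => L p.2 (b p.1 p.2) :=
    isBoundedBilinearMap_apply.continuous.comp_stronglyMeasurable
      ((hL.comp continuous_snd).stronglyMeasurable.prodMk hb.1.stronglyMeasurable)
  have hb_int : Integrable (uncurry b)
      ((volume.restrict (Icc 0 T)).prod (volume.restrict (closedBall (0 : E) R))) := by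
    rw [Measure.prod_restrict]
    exact hb.2 R
  have hint : Integrable (fun p : ℝ × E => L p.2 (b p.1 p.2))
      ((volume.restrict (Icc 0 T)).prod (volume.restrict (closedBall (0 : E) R))) :=
    (hb_int.norm.const_mul M).mono' hmeas.aestronglyMeasurable
      (Eventually.of_forall fun p => (L p.2).le_of_opNorm_le (hM p.2) _)
  rw [← Measure.restrict_univ (μ := volume.restrict (Icc 0 T)), Measure.prod_restrict] at hint
  exact IntegrableOn.integrable_of_forall_notMem_eq_zero hint fun p hp => by
    rw [hLR p.2 fun h => hp ⟨mem_univ _, h⟩, zero_apply]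

theorem IsRLF.aemeasurable_uncurry [BorelSpace E] [SFinite ν] (hX : IsRLF b T ν X) :
    AEMeasurable (uncurry X) ((volume.restrict (Icc 0 T)).prod ν) :=
  aemeasurable_uncurry_of_ae_continuousOn measurableSet_Icc hX.2.1 hX.ae_continuousOn

theorem IsRLF.integrable_comp [BorelSpace E] [SFinite ν] [SFinite (volume : Measure E)]
    {F : Type*} [NormedAddCommGroup F] {G : ℝ × E → F} (hX : IsRLF b T ν X)
    (hG : Integrable G ((volume.restrict (Icc 0 T)).prod volume)) :
    Integrable (fun p : ℝ × E => G (p.1, X p.1 p.2)) ((volume.restrict (Icc 0 T)).prod ν) := by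
  obtain ⟨C, hC⟩ := hX.2.2
  have compression := map_prodMk_le_smul_prod (κ := (volume : Measure E)) (C := C)
    hX.aemeasurable_uncurry ((ae_restrict_mem measurableSet_Icc).mono hC)
  exact (hG.smul_measure_nnreal.mono_measure compression).comp_aemeasurable
    (measurable_fst.aemeasurable.prodMk hX.aemeasurable_uncurry)

theorem IsRLF.integrable_comp_of_hasCompactSupport [BorelSpace E] [IsFiniteMeasure ν]
    {φ : E → ℝ} (hX : IsRLF b T ν X) (hφ : Continuous φ) (hφc : HasCompactSupport φ) :
    Integrable (fun p : ℝ × E => φ (X p.1 p.2)) ((volume.restrict (Icc 0 T)).prod ν) := by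
  obtain ⟨M, hM⟩ := hφc.exists_bound_of_continuous hφ
  exact .of_bound
    (hφ.measurable.comp_aemeasurable hX.aemeasurable_uncurry).aestronglyMeasurable M
    (Eventually.of_forall fun p => hM _)

theorem IsRLF.ae_setIntegral_deriv_mul_add_eq_zero [CompleteSpace E] (hT : 0 ≤ T)
    (hX : IsRLF b T ν X) {φ : E → ℝ} {ψ : ℝ → ℝ} (hφ : ContDiff ℝ 1 φ)
    (hφc : HasCompactSupport φ) (hψ : ContDiff ℝ 1 ψ) (hψT : tsupport ψ ⊆ Ioo 0 T) :
    ∀ᵐ x ∂ν, ∫ t in Icc 0 T,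
      (deriv ψ t * φ (X t x) + ψ t * fderiv ℝ φ (X t x) (b t (X t x))) = 0 := by
  obtain ⟨K, hφK⟩ := hφ.lipschitzWith_of_hasCompactSupport hφc one_ne_zero
  have hψ_zero : ∀ t ∉ Ioo 0 T, ψ t = 0 := fun t ht =>
    image_eq_zero_of_notMem_tsupport fun h => ht (hψT h)
  filter_upwards [hX.1] with x ⟨_, hint, hcurve⟩
  rw [integral_Icc_eq_integral_Ioc, ← intervalIntegral.integral_of_le hT]
  exact integral_deriv_mul_add_mul_fderiv_comp_eq_zero
    ((intervalIntegrable_iff_integrableOn_Icc_of_le hT).2 hint) (by rwa [uIcc_of_le hT])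
    (hφ.differentiable one_ne_zero) hφK hψ.contDiffOn.absolutelyContinuousOnInterval
    (hψ_zero 0 left_notMem_Ioo) (hψ_zero T right_notMem_Ioo)

theorem IsRLF.solvesContinuityEquation [CompleteSpace E] [SecondCountableTopology E]
    [BorelSpace E] [SFinite (volume : Measure E)] [IsFiniteMeasure ν] (hT : 0 ≤ T)
    (hb : BorelLocIntegrable b T) (hX : IsRLF b T ν X) :
    SolvesContinuityEquation b T fun t => Measure.map (X t) ν := by
  intro φ hφ hφc ψ hψ hψc hψT
  have hφ₁ : ContDiff ℝ 1 φ := hφ.of_le (by simp)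
  have hψ₁ : ContDiff ℝ 1 ψ := hψ.of_le (by simp)
  have hDφ : Continuous (fderiv ℝ φ) := hφ₁.continuous_fderiv one_ne_zero
  have hDφb : ∀ t, StronglyMeasurable fun x => fderiv ℝ φ x (b t x) := fun t =>
    isBoundedBilinearMap_apply.continuous.comp_stronglyMeasurable
      (hDφ.stronglyMeasurable.prodMk hb.1.of_uncurry_left.stronglyMeasurable)
  have time_term := integrable_continuous_fst_mul hψ₁.continuous_deriv_one hψc.deriv
    (hX.integrable_comp_of_hasCompactSupport hφ₁.continuous hφc)
  have space_term := integrable_continuous_fst_mul hψ₁.continuous hψc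
    (hX.integrable_comp (hb.integrable_clm_apply hDφ (hφc.fderiv ℝ)))
  rw [← integral_Icc_eq_integral_Ioo]
  calc ∫ t in Icc 0 T, (deriv ψ t * ∫ x, φ x ∂Measure.map (X t) ν +
        ψ t * ∫ x, fderiv ℝ φ x (b t x) ∂Measure.map (X t) ν)
      = ∫ t in Icc 0 T, ∫ x, (deriv ψ t * φ (X t x) +
          ψ t * fderiv ℝ φ (X t x) (b t (X t x))) ∂ν := by
        refine integral_congr_ae ?_
        filter_upwards [time_term.prod_right_ae, space_term.prod_right_ae,
          ae_restrict_mem measurableSet_Icc] with t htime hspace ht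
        rw [integral_map (hX.2.1 t ht) hφ₁.continuous.aestronglyMeasurable,
          integral_map (hX.2.1 t ht) (hDφb t).aestronglyMeasurable,
          integral_add htime hspace, integral_const_mul, integral_const_mul]
    _ = ∫ x, (∫ t in Icc 0 T, (deriv ψ t * φ (X t x) +
          ψ t * fderiv ℝ φ (X t x) (b t (X t x)))) ∂ν :=
        integral_integral_swap (time_term.add space_term)
    _ = 0 := integral_eq_zero_of_ae
        (hX.ae_setIntegral_deriv_mul_add_eq_zero hT hφ₁ hφc hψ₁ hψT)

section Uniqueness

variable [CompleteSpace E] [SecondCountableTopology E] [BorelSpace E]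
  [SFinite (volume : Measure E)]

theorem CEUniqueness.map_flow_eq [IsFiniteMeasure ν] (huniq : CEUniqueness b T)
    (hb : BorelLocIntegrable b T) (hX : IsRLF b T ν X) (hY : IsRLF b T ν Y) {t : ℝ}
    (ht : t ∈ Icc 0 T) : Measure.map (X t) ν = Measure.map (Y t) ν := by
  have hT : 0 ≤ T := ht.1.trans ht.2
  have initial_eq : X 0 =ᵐ[ν] Y 0 := by
    filter_upwards [hX.1, hY.1] with x hx hy
    rw [hx.1, hy.1]
  exact huniq _ _ hX.inL1LinftyClass hY.inL1LinftyClass hX.weaklyContinuous hY.weaklyContinuous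
    (hX.solvesContinuityEquation hT hb) (hY.solvesContinuityEquation hT hb)
    (Measure.map_congr initial_eq) t ht

theorem CEUniqueness.ae_eqOn_flow [SFinite ν] (huniq : CEUniqueness b T)
    (hb : BorelLocIntegrable b T) (hX : IsRLF b T ν X) (hY : IsRLF b T ν Y) :
    ∀ᵐ x ∂ν, EqOn (X · x) (Y · x) (Icc 0 T) := by
  refine ae_eqOn_of_forall_ae_eq (fun t ht => ?_) hX.ae_continuousOn hY.ae_continuousOn
  rw [← sum_sfiniteSeq ν]
  refine Measure.ae_sum_iff.2 fun n => ?_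
  have hXn := hX.mono_measure (sfiniteSeq_le ν n)
  have hYn := hY.mono_measure (sfiniteSeq_le ν n)
  refine ae_eq_of_map_restrict_absolutelyContinuous (hXn.2.1 t ht) (hYn.2.1 t ht) fun A _ => ?_
  exact (huniq.map_flow_eq hb (hYn.mono_measure Measure.restrict_le_self)
    (hXn.mono_measure Measure.restrict_le_self) ht).absolutelyContinuous

theorem uniqueness_of_nu_RLF_general (hb : BorelLocIntegrable b T) (huniq : CEUniqueness b T)
    {f g : E → ℝ} (hf : AEMeasurable f) (hg : AEMeasurable g)
    (hX : IsRLF b T (volume.withDensity fun x => ENNReal.ofReal (f x)) X)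
    (hY : IsRLF b T (volume.withDensity fun x => ENNReal.ofReal (g x)) Y) :
    ∀ᵐ x, 0 < f x ∧ 0 < g x → ∀ t ∈ Icc 0 T, X t x = Y t x := by
  set κ : Measure E := volume.withDensity fun x => ENNReal.ofReal (min (f x) (g x))
  have hXκ : IsRLF b T κ X := hX.mono_measure <| withDensity_mono <|
    Eventually.of_forall fun x => ENNReal.ofReal_le_ofReal (min_le_left _ _)
  have hYκ : IsRLF b T κ Y := hY.mono_measure <| withDensity_mono <|
    Eventually.of_forall fun x => ENNReal.ofReal_le_ofReal (min_le_right _ _)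
  have ae_eqOn_density := (ae_withDensity_iff' (hf.min hg).ennreal_ofReal).1
    (huniq.ae_eqOn_flow hb hXκ hYκ)
  filter_upwards [ae_eqOn_density] with x hx ⟨hfx, hgx⟩
  exact hx (ENNReal.ofReal_pos.2 (lt_min hfx hgx)).ne'

end Uniqueness

end Flow

/-- Uniqueness of the `ν`-RLF in `ℝ^d` in the strong sense.
If the continuity equation has uniqueness in `L∞₊([0,T]; L¹ ∩ L∞)`, `f, g ∈ L¹ ∩ L∞` are
nonnegative, `X` is an `(f·L^d)`-RLF and `Y` a `(g·L^d)`-RLF relative to `b`, then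
`X(·,x) = Y(·,x)` on `[0,T]` for `L^d`-a.e. `x ∈ {f > 0} ∩ {g > 0}`. -/
theorem uniqueness_of_nu_RLF {d : ℕ} (T : ℝ) (hT : 0 < T)
    (b : ℝ → EuclideanSpace ℝ (Fin d) → EuclideanSpace ℝ (Fin d))
    (hb : BorelLocIntegrable b T)
    (huniq : CEUniqueness b T)
    (f g : EuclideanSpace ℝ (Fin d) → ℝ)
    (hf_int : Integrable f) (hf_nonneg : ∀ x, 0 ≤ f x)
    (hf_bdd : ∃ C : ℝ, ∀ᵐ x ∂(volume : Measure (EuclideanSpace ℝ (Fin d))), f x ≤ C)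
    (hg_int : Integrable g) (hg_nonneg : ∀ x, 0 ≤ g x)
    (hg_bdd : ∃ C : ℝ, ∀ᵐ x ∂(volume : Measure (EuclideanSpace ℝ (Fin d))), g x ≤ C)
    (X Y : ℝ → EuclideanSpace ℝ (Fin d) → EuclideanSpace ℝ (Fin d))
    (hX : IsRLF b T ((volume : Measure (EuclideanSpace ℝ (Fin d))).withDensity
            (fun x => ENNReal.ofReal (f x))) X)
    (hY : IsRLF b T ((volume : Measure (EuclideanSpace ℝ (Fin d))).withDensity
            (fun x => ENNReal.ofReal (g x))) Y) :
    ∀ᵐ x ∂(volume : Measure (EuclideanSpace ℝ (Fin d))),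
      (0 < f x ∧ 0 < g x) → ∀ t ∈ Icc 0 T, X t x = Y t x := by
  exact uniqueness_of_nu_RLF_general hb huniq hf_int.aemeasurable hg_int.aemeasurable hX hY

end
end

section
/- Assume that the continuity equation d/dt w_t + ∇·(b_t w_t) = 0 has uniqueness in L∞₊([0,T]; L¹(ℝ^d) ∩ L∞(ℝ^d)). Then for every regular nonnegative σ-finite measure 𝛎 on P(ℝ^d) there exists at most one 𝛎-regular Lagrangian flow in P(ℝ^d) relative to b: if 𝛍¹ and 𝛍² are both 𝛎-RLFs in P(ℝ^d), then for 𝛎-a.e. μ one has 𝛍¹(t,μ) = 𝛍²(t,μ) for all t ∈ [0,T]. -/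
open MeasureTheory Set Filter Metric Function
open scoped ENNReal NNReal Topology

noncomputable section

variable {E : Type*} [NormedAddCommGroup E] [NormedSpace ℝ E] [MeasureSpace E]

/-!
Let `M₁`, `M₂` be two flows. For a set `A` of initial measures of finite `𝛎`-mass, the mixtures
`t ↦ ∫_A Mᵢ(t, μ) d𝛎(μ)` have finite mass, have bounded densities because the flows are regular, and
solve the continuity equation because it is linear in the measure; uniqueness in `L¹ ∩ L∞` makes
them equal. As `A` varies this forces `M₁(t, ·) = M₂(t, ·)` almost everywhere, for each `t`, and
weak continuity turns this into a single null set for all `t`.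

Averaging the equation over `μ` needs Fubini's theorem, hence joint measurability of
`(t, μ) ↦ M t μ`. The definition of a flow gives only a.e.-measurability at fixed times; as
functions continuous in time and measurable in `μ` are jointly measurable, the flow agrees, off a
null set of `μ`, with a Markov kernel.
-/

open ProbabilityTheory TopologicalSpace

section VagueContinuity

lemma hasCompactSupport_thickenedIndicator {S : Type*} [PseudoMetricSpace S] [ProperSpace S]
    {K : Set S} (hK : IsCompact K) {δ : ℝ} (hδ : 0 < δ) :
    HasCompactSupport fun x => (thickenedIndicator hδ K x : ℝ) :=
  .intro' (hK.cthickening (r := δ)) isClosed_cthickening fun x hx => by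
    rw [thickenedIndicator_zero hδ K fun h => hx (thickening_subset_cthickening _ _ h),
      NNReal.coe_zero]

variable {S Y Ω : Type*} [MeasurableSpace S] [MeasurableSpace Ω]

lemma measurable_of_measurable_isCompact [TopologicalSpace S] [SigmaCompactSpace S] [BorelSpace S]
    {κ : Ω → Measure S} [∀ ω, IsProbabilityMeasure (κ ω)]
    (h : ∀ K, IsCompact K → Measurable fun ω => κ ω K) : Measurable κ := by
  refine .measure_of_isPiSystem_of_isProbabilityMeasure
    ((BorelSpace.measurable_eq (α := S)).trans borel_eq_generateFrom_isClosed)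
    isPiSystem_isClosed fun F (hF : IsClosed F) => ?_
  have hF_iUnion : F = ⋃ n, F ∩ compactCovering S n := by
    rw [← inter_iUnion, iUnion_compactCovering, inter_univ]
  refine measurable_of_tendsto_metrizable (f := fun n ω => κ ω (F ∩ compactCovering S n))
    (fun n => h _ ((isCompact_compactCovering S n).inter_left hF))
    (tendsto_pi_nhds.2 fun ω => ?_)
  conv => enter [3, 1]; rw [hF_iUnion]
  exact tendsto_measure_iUnion_atTop fun m n hmn =>
    inter_subset_inter_right F (compactCovering_subset S hmn)

lemma measurable_of_measurable_integral [MetricSpace S] [ProperSpace S] [BorelSpace S]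
    {κ : Ω → Measure S} [∀ ω, IsProbabilityMeasure (κ ω)]
    (h : ∀ φ : S → ℝ, Continuous φ → HasCompactSupport φ → Measurable fun ω => ∫ x, φ x ∂(κ ω)) :
    Measurable κ := by
  refine measurable_of_measurable_isCompact fun K hK => ?_
  have hpos (n : ℕ) : (0 : ℝ) < 1 / (n + 1) := Nat.one_div_pos_of_nat
  refine measurable_of_tendsto_metrizable
    (f := fun n ω => ∫⁻ x, thickenedIndicator (hpos n) K x ∂(κ ω)) (fun n => ?_)
    (tendsto_pi_nhds.2 fun ω => tendsto_lintegral_thickenedIndicator_of_isClosed (κ ω)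
      hK.isClosed hpos tendsto_one_div_add_atTop_nhds_zero_nat)
  have hcont : Continuous fun x => (thickenedIndicator (hpos n) K x : ℝ) :=
    NNReal.continuous_coe.comp (thickenedIndicator (hpos n) K).continuous
  have hsupp := hasCompactSupport_thickenedIndicator hK (hpos n)
  convert (h _ hcont hsupp).ennreal_ofReal using 2 with ω
  rw [ofReal_integral_eq_lintegral_ofReal (hcont.integrable_of_hasCompactSupport hsupp)
    (.of_forall fun x => NNReal.coe_nonneg _)]
  simp only [ENNReal.ofReal_coe_nnreal]

lemma measurable_of_continuous_of_measurable_dense [TopologicalSpace Y] [FrechetUrysohnSpace Y]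
    {D : Set Y} (hD : Dense D) {u : Y → Ω → ℝ} (hcont : ∀ ω, Continuous fun t => u t ω)
    (hmeas : ∀ t ∈ D, Measurable (u t)) (t : Y) : Measurable (u t) := by
  obtain ⟨s, hsD, hs⟩ := mem_closure_iff_seq_limit.1 (hD t)
  exact measurable_of_tendsto_metrizable (fun n => hmeas _ (hsD n))
    (tendsto_pi_nhds.2 fun ω => ((hcont ω).tendsto t).comp hs)

section Curves

variable [TopologicalSpace Y] [TopologicalSpace S]

/-- Vague continuity of a family of measures: integrals against continuous compactly supported
functions depend continuously on the parameter. -/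
def VaguelyContinuous (m : Y → Measure S) : Prop :=
  ∀ φ : S → ℝ, Continuous φ → HasCompactSupport φ → Continuous fun t => ∫ x, φ x ∂(m t)

lemma VaguelyContinuous.comp {Z : Type*} [TopologicalSpace Z] {m : Y → Measure S}
    (hm : VaguelyContinuous m) {g : Z → Y} (hg : Continuous g) :
    VaguelyContinuous fun z => m (g z) :=
  fun φ hφ hφs => (hm φ hφ hφs).comp hg

lemma vaguelyContinuous_const (μ : Measure S) : VaguelyContinuous fun _ : Y => μ :=
  fun _ _ _ => continuous_const

end Curves

section ProperCurves

variable [MetricSpace S] [ProperSpace S] [BorelSpace S] [TopologicalSpace Y]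

lemma measurable_uncurry_of_vaguelyContinuous [MeasurableSpace Y] [MetrizableSpace Y]
    [SecondCountableTopology Y] [OpensMeasurableSpace Y] {m : Y → Ω → Measure S}
    [∀ t ω, IsProbabilityMeasure (m t ω)] (hcont : ∀ ω, VaguelyContinuous fun t => m t ω)
    {D : Set Y} (hD : Dense D) (hmeas : ∀ t ∈ D, Measurable (m t)) :
    Measurable (uncurry m) := by
  have (p : Y × Ω) : IsProbabilityMeasure (uncurry m p) :=
    inferInstanceAs (IsProbabilityMeasure (m p.1 p.2))
  refine measurable_of_measurable_integral fun φ hφ hφs => ?_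
  refine measurable_uncurry_of_continuous_of_measurable (u := fun t ω => ∫ x, φ x ∂(m t ω))
    (fun ω => hcont ω φ hφ hφs)
    (measurable_of_continuous_of_measurable_dense hD (fun ω => hcont ω φ hφ hφs) fun t ht => ?_)
  exact (StronglyMeasurable.integral_kernel (κ := ⟨m t, hmeas t ht⟩)
    hφ.stronglyMeasurable).measurable

lemma exists_isMarkovKernel_ae_eq [MeasurableSpace Y] [MetrizableSpace Y]
    [SecondCountableTopology Y] [OpensMeasurableSpace Y] [Nonempty S] {ν : Measure Ω}
    {m : Y → Ω → ProbabilityMeasure S}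
    (hcont : ∀ᵐ ω ∂ν, VaguelyContinuous fun t => (m t ω : Measure S))
    (hmeas : ∀ t, AEMeasurable (m t) ν) :
    ∃ κ : Kernel (Y × Ω) S, IsMarkovKernel κ ∧ ∀ᵐ ω ∂ν, ∀ t, κ (t, ω) = m t ω := by
  classical
  obtain ⟨D, hDc, hD⟩ := exists_countable_dense Y
  have hmk : ∀ᵐ ω ∂ν, ∀ t ∈ D, m t ω = (hmeas t).mk (m t) ω :=
    (ae_ball_iff hDc).2 fun t _ => (hmeas t).ae_eq_mk
  obtain ⟨G, hGν, hG, hGm⟩ := (hcont.and hmk).exists_measurable_mem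
  let x₀ : S := Classical.arbitrary S
  let m' (t : Y) (ω : Ω) : Measure S := if ω ∈ G then m t ω else .dirac x₀
  have hm'G {ω : Ω} (hω : ω ∈ G) (t : Y) : m' t ω = m t ω := if_pos hω
  have hm'_prob (t : Y) (ω : Ω) : IsProbabilityMeasure (m' t ω) := by
    by_cases hω : ω ∈ G <;> simp only [m', hω, if_true, if_false] <;> infer_instance
  have hm'_cont (ω : Ω) : VaguelyContinuous fun t => m' t ω := by
    by_cases hω : ω ∈ G
    · simpa only [hm'G hω] using (hGm ω hω).1
    · simpa only [m', hω, if_false] using vaguelyContinuous_const (.dirac x₀)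
  have hm'_meas : ∀ t ∈ D, Measurable (m' t) := by
    intro t ht
    have : m' t = fun ω =>
        if ω ∈ G then (((hmeas t).mk (m t) ω : ProbabilityMeasure S) : Measure S)
        else .dirac x₀ := by
      ext1 ω
      by_cases hω : ω ∈ G
      · simp only [m', hω, if_true, (hGm ω hω).2 t ht]
      · simp only [m', hω, if_false]
    rw [this]
    exact .ite hG (measurable_subtype_coe.comp (hmeas t).measurable_mk) measurable_const
  refine ⟨⟨uncurry m', measurable_uncurry_of_vaguelyContinuous hm'_cont hD hm'_meas⟩,
    ⟨fun p => hm'_prob p.1 p.2⟩, ?_⟩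
  filter_upwards [hGν] with ω hω t using hm'G hω t

lemma ae_forall_eq_of_forall_ae_eq [SeparableSpace Y] {ν : Measure Ω}
    {m₁ m₂ : Y → Ω → ProbabilityMeasure S}
    (h₁ : ∀ᵐ ω ∂ν, VaguelyContinuous fun t => (m₁ t ω : Measure S))
    (h₂ : ∀ᵐ ω ∂ν, VaguelyContinuous fun t => (m₂ t ω : Measure S))
    (h : ∀ t, m₁ t =ᵐ[ν] m₂ t) : ∀ᵐ ω ∂ν, ∀ t, m₁ t ω = m₂ t ω := by
  obtain ⟨D, hDc, hD⟩ := exists_countable_dense Y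
  filter_upwards [h₁, h₂, (ae_ball_iff hDc).2 fun t _ => h t] with ω hω₁ hω₂ hωD t
  refine ProbabilityMeasure.toMeasure_injective
    (Measure.ext_of_integral_eq_on_compactlySupported fun φ => ?_)
  refine congrFun (Continuous.ext_on hD (hω₁ φ φ.continuous φ.hasCompactSupport)
    (hω₂ φ φ.continuous φ.hasCompactSupport) fun s hs => ?_) t
  simp only [hωD s hs]

end ProperCurves

end VagueContinuity

section Composition

variable {S Ω : Type*} [MeasurableSpace S] [MeasurableSpace Ω]

lemma integral_measure_comp {κ : Kernel Ω S} [IsSFiniteKernel κ] {ρ : Measure Ω} [SFinite ρ]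
    {f : S → ℝ} (hf : Integrable f (κ ∘ₘ ρ)) :
    ∫ x, f x ∂(κ ∘ₘ ρ) = ∫ ω, ∫ x, f x ∂(κ ω) ∂ρ := by
  rw [← Measure.snd_compProd] at hf ⊢
  rw [Measure.snd, integral_map measurable_snd.aemeasurable hf.1,
    Measure.integral_compProd (f := fun p => f p.2) (hf.comp_measurable measurable_snd)]

lemma sigmaFinite_of_sigmaFinite_comp {κ : Kernel Ω S} {ρ : Measure Ω} [SigmaFinite (κ ∘ₘ ρ)]
    (hκ : ∀ ω, κ ω ≠ 0) : SigmaFinite ρ := by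
  obtain ⟨g, hg_pos, hg, hg_lt⟩ := exists_pos_lintegral_lt_of_sigmaFinite (κ ∘ₘ ρ) one_ne_zero
  have hg' : Measurable fun x => (g x : ℝ≥0∞) := hg.coe_nnreal_ennreal
  let f (ω : Ω) : ℝ≥0∞ := ∫⁻ x, g x ∂(κ ω)
  have hf : Measurable f := hg'.lintegral_kernel
  have hf_ne_zero (ω : Ω) : f ω ≠ 0 := by
    have hsupp : support (fun x => (g x : ℝ≥0∞)) = univ :=
      eq_univ_of_forall fun x => (ENNReal.coe_pos.2 (hg_pos x)).ne'
    rw [← pos_iff_ne_zero, lintegral_pos_iff_support hg', hsupp, pos_iff_ne_zero]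
    exact Measure.measure_univ_ne_zero.2 (hκ ω)
  have hf_lintegral : ∫⁻ ω, f ω ∂ρ ≠ ∞ := by
    rw [← Measure.lintegral_bind κ.aemeasurable hg'.aemeasurable]
    exact hg_lt.ne_top
  have : IsFiniteMeasure (ρ.withDensity f) := isFiniteMeasure_withDensity hf_lintegral
  rw [← withDensity_inv_same hf (.of_forall hf_ne_zero)
    ((ae_lt_top hf hf_lintegral).mono fun _ h => h.ne)]
  exact .withDensity_of_ne_top (.of_forall fun ω => ENNReal.inv_ne_top.2 (hf_ne_zero ω))

lemma ae_eq_of_forall_comp_restrict_eq [MeasurableSpace.CountableOrCountablyGenerated Ω S]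
    {ρ : Measure Ω} [IsFiniteMeasure ρ] {κ η : Kernel Ω S} [IsFiniteKernel κ] [IsFiniteKernel η]
    (h : ∀ A, MeasurableSet A → κ ∘ₘ ρ.restrict A = η ∘ₘ ρ.restrict A) : κ =ᵐ[ρ] η := by
  refine Kernel.ae_eq_of_compProd_eq (Measure.ext_prod fun {A B} hA hB => ?_)
  simpa only [Measure.compProd_apply_prod hA hB, Measure.bind_apply hB (Kernel.aemeasurable _)]
    using DFunLike.congr_fun (h A hA) B

end Composition

section Expectation

variable {S Ω : Type*} [MeasurableSpace S] [MeasurableSpace Ω]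

/-- The tautological Markov kernel sending a probability measure to itself; `expectation 𝛎` is
its composition with `𝛎`. -/
def tautologicalKernel (S : Type*) [MeasurableSpace S] : Kernel (ProbabilityMeasure S) S :=
  ⟨Subtype.val, measurable_subtype_coe⟩

instance : IsMarkovKernel (tautologicalKernel S) :=
  ⟨fun μ => μ.2⟩

lemma expectation_eq_comp (ν : Measure (ProbabilityMeasure S)) :
    expectation ν = tautologicalKernel S ∘ₘ ν :=
  rfl

lemma expectation_univ (ν : Measure (ProbabilityMeasure S)) : expectation ν univ = ν univ :=
  Measure.comp_apply_univ (κ := tautologicalKernel S)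

lemma expectation_mono {ν ν' : Measure (ProbabilityMeasure S)} (h : ν ≤ ν') :
    expectation ν ≤ expectation ν' := by
  refine Measure.le_iff.2 fun s hs => ?_
  simp only [expectation_eq_comp, Measure.bind_apply hs (Kernel.aemeasurable _)]
  exact lintegral_mono' h le_rfl

lemma integral_expectation {ν : Measure (ProbabilityMeasure S)} [SFinite ν] {f : S → ℝ}
    (hf : Integrable f (expectation ν)) :
    ∫ x, f x ∂(expectation ν) = ∫ μ : ProbabilityMeasure S, ∫ x, f x ∂(μ : Measure S) ∂ν :=
  integral_measure_comp (κ := tautologicalKernel S) hf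

lemma sigmaFinite_of_sigmaFinite_expectation {ν : Measure (ProbabilityMeasure S)}
    [SigmaFinite (expectation ν)] : SigmaFinite ν :=
  have : SigmaFinite (tautologicalKernel S ∘ₘ ν) := ‹_›
  sigmaFinite_of_sigmaFinite_comp (κ := tautologicalKernel S) fun _ =>
    IsProbabilityMeasure.ne_zero _

lemma stronglyMeasurable_integral_probabilityMeasure {f : S → ℝ} (hf : StronglyMeasurable f) :
    StronglyMeasurable fun μ : ProbabilityMeasure S => ∫ x, f x ∂(μ : Measure S) :=
  hf.integral_kernel (κ := tautologicalKernel S)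

/-- The mixture `E(m_♯ ρ)` of the probability measures `m ω` with weights `ρ(dω)`. -/
def mixture (ρ : Measure Ω) (m : Ω → ProbabilityMeasure S) : Measure S :=
  expectation (ρ.map m)

section Mixture

variable {ρ : Measure Ω} {m m' : Ω → ProbabilityMeasure S}

lemma mixture_eq_bind (hm : AEMeasurable m ρ) :
    mixture ρ m = ρ.bind fun ω => (m ω : Measure S) :=
  congrArg Measure.join
    (AEMeasurable.map_map_of_aemeasurable measurable_subtype_coe.aemeasurable hm)

lemma mixture_congr (h : m =ᵐ[ρ] m') : mixture ρ m = mixture ρ m' :=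
  congrArg expectation (Measure.map_congr h)

lemma mixture_univ (hm : AEMeasurable m ρ) : mixture ρ m univ = ρ univ := by
  rw [mixture, expectation_univ, Measure.map_apply_of_aemeasurable hm .univ, preimage_univ]

lemma isFiniteMeasure_mixture [IsFiniteMeasure ρ] (hm : AEMeasurable m ρ) :
    IsFiniteMeasure (mixture ρ m) :=
  ⟨(mixture_univ hm).trans_lt (measure_lt_top ρ univ)⟩

lemma integral_mixture [SFinite ρ] (hm : AEMeasurable m ρ) {f : S → ℝ}
    (hf : StronglyMeasurable f) (hf_int : Integrable f (mixture ρ m)) :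
    ∫ x, f x ∂(mixture ρ m) = ∫ ω, ∫ x, f x ∂(m ω : Measure S) ∂ρ := by
  rw [mixture, integral_expectation hf_int, integral_map hm
    (stronglyMeasurable_integral_probabilityMeasure hf).aestronglyMeasurable]

lemma ae_eq_of_forall_mixture_restrict_eq [MeasurableSpace.CountablyGenerated S]
    [IsFiniteMeasure ρ] (hm : AEMeasurable m ρ) (hm' : AEMeasurable m' ρ)
    (h : ∀ A, MeasurableSet A → mixture (ρ.restrict A) m = mixture (ρ.restrict A) m') :
    m =ᵐ[ρ] m' := by
  have mixture_eq_comp {m : Ω → ProbabilityMeasure S} (hm : AEMeasurable m ρ) (A : Set Ω) :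
      mixture (ρ.restrict A) m =
        (tautologicalKernel S).comap (hm.mk m) hm.measurable_mk ∘ₘ ρ.restrict A := by
    rw [mixture_congr (ae_restrict_of_ae hm.ae_eq_mk)]
    exact mixture_eq_bind hm.measurable_mk.aemeasurable
  have h_mk := ae_eq_of_forall_comp_restrict_eq fun A hA =>
    (mixture_eq_comp hm A).symm.trans ((h A hA).trans (mixture_eq_comp hm' A))
  filter_upwards [hm.ae_eq_mk, hm'.ae_eq_mk, h_mk] with ω hω hω' hω_mk
  rw [hω, hω']
  exact Subtype.ext hω_mk

end Mixture

end Expectation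

section Fubini

variable {X Ω S : Type*} [MeasurableSpace X] [MeasurableSpace Ω] [MeasurableSpace S]
  {τ : Measure X} {ρ : Measure Ω} {lam : Measure S} {κ : Kernel (X × Ω) S} {C : ℝ≥0}

lemma map_compProd_le_of_ae_comp_le [SFinite τ] [SFinite ρ] [SFinite lam] [IsSFiniteKernel κ]
    (h : ∀ᵐ t ∂τ, κ.sectR t ∘ₘ ρ ≤ C • lam) :
    ((τ.prod ρ) ⊗ₘ κ).map (fun q => (q.1.1, q.2)) ≤ C • τ.prod lam := by
  have hproj : Measurable fun q : (X × Ω) × S => (q.1.1, q.2) := by fun_prop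
  refine Measure.le_iff.2 fun s hs => ?_
  have hs' (t : X) : MeasurableSet (Prod.mk t ⁻¹' s) := measurable_prodMk_left hs
  have hκs : Measurable fun p : X × Ω => κ p (Prod.mk p.1 ⁻¹' s) :=
    Kernel.measurable_kernel_prodMk_left (hproj hs)
  calc ((τ.prod ρ) ⊗ₘ κ).map (fun q => (q.1.1, q.2)) s
      = ∫⁻ p, κ p (Prod.mk p.1 ⁻¹' s) ∂(τ.prod ρ) := by
        rw [Measure.map_apply hproj hs, Measure.compProd_apply (hproj hs)]
        rfl
    _ = ∫⁻ t, (κ.sectR t ∘ₘ ρ) (Prod.mk t ⁻¹' s) ∂τ := by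
        rw [lintegral_prod _ hκs.aemeasurable]
        simp only [Measure.bind_apply (hs' _) (Kernel.aemeasurable _), Kernel.sectR_apply]
    _ ≤ ∫⁻ t, C * lam (Prod.mk t ⁻¹' s) ∂τ :=
        lintegral_mono_ae (h.mono fun t ht => ht _)
    _ = (C • τ.prod lam) s := by
        rw [lintegral_const_mul _ (measurable_measure_prodMk_left hs), Measure.smul_apply,
          Measure.prod_apply hs]
        rfl

lemma integrable_integral_kernel_of_ae_comp_le [SFinite τ] [SFinite ρ] [SFinite lam]
    [IsSFiniteKernel κ] (h : ∀ᵐ t ∂τ, κ.sectR t ∘ₘ ρ ≤ C • lam) {F : X × S → ℝ}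
    (hF : Integrable F (τ.prod lam)) :
    Integrable (fun p : X × Ω => ∫ x, F (p.1, x) ∂(κ p)) (τ.prod ρ) := by
  have hF' : Integrable (fun q : (X × Ω) × S => F (q.1.1, q.2)) ((τ.prod ρ) ⊗ₘ κ) :=
    ((hF.smul_measure_nnreal (c := C)).mono_measure
      (map_compProd_le_of_ae_comp_le h)).comp_measurable (by fun_prop)
  exact hF'.integral_compProd

lemma ae_integral_comp_eq_of_ae_comp_le [SFinite τ] [SFinite ρ] [SFinite lam]
    [IsSFiniteKernel κ] (h : ∀ᵐ t ∂τ, κ.sectR t ∘ₘ ρ ≤ C • lam) {F : X × S → ℝ}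
    (hF : Integrable F (τ.prod lam)) :
    ∀ᵐ t ∂τ, ∫ x, F (t, x) ∂(κ.sectR t ∘ₘ ρ) = ∫ ω, ∫ x, F (t, x) ∂(κ (t, ω)) ∂ρ := by
  filter_upwards [h, hF.prod_right_ae] with t ht hFt
  exact integral_measure_comp ((hFt.smul_measure_nnreal (c := C)).mono_measure ht)

end Fubini

section ContinuityEquation

lemma SolvesContinuityEquation.congr {b : ℝ → E → E} {T : ℝ} {μ μ' : ℝ → Measure E}
    (hμ : SolvesContinuityEquation b T μ) (h : ∀ t ∈ Ioo 0 T, μ t = μ' t) :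
    SolvesContinuityEquation b T μ' := by
  intro φ hφ hφs ψ hψ hψs hψT
  refine (setIntegral_congr_fun measurableSet_Ioo fun t ht => ?_).trans
    (hμ φ hφ hφs ψ hψ hψs hψT)
  simp only [h t ht]

variable [FiniteDimensional ℝ E] [BorelSpace E] [IsLocallyFiniteMeasure (volume : Measure E)]
  {Ω : Type*} [MeasurableSpace Ω] {b : ℝ → E → E} {T : ℝ}

lemma BorelLocIntegrable.integrable_fderiv_apply (hb : BorelLocIntegrable b T) {φ : E → ℝ}
    (hφ : ContDiff ℝ 1 φ) (hφs : HasCompactSupport φ) :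
    Integrable (fun p : ℝ × E => fderiv ℝ φ p.2 (b p.1 p.2))
      ((volume.restrict (Ioo 0 T)).prod volume) := by
  have := FiniteDimensional.proper ℝ E
  have hφ' : Continuous (fderiv ℝ φ) := hφ.continuous_fderiv one_ne_zero
  obtain ⟨K, hK⟩ := hφ'.bounded_above_of_compact_support (hφs.fderiv ℝ)
  obtain ⟨R, hR⟩ := (hφs.fderiv ℝ).isCompact.isBounded.subset_closedBall 0
  have hsupp : support (fun p : ℝ × E => fderiv ℝ φ p.2 (b p.1 p.2)) ⊆ univ ×ˢ closedBall 0 R := by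
    refine fun p hp => ⟨mem_univ _, hR (subset_tsupport _ fun h0 => hp ?_)⟩
    simp only [h0, zero_apply]
  have hmeas : Measurable fun p : ℝ × E => fderiv ℝ φ p.2 (b p.1 p.2) :=
    (continuous_fst.clm_apply continuous_snd).measurable.comp
      ((hφ'.measurable.comp measurable_snd).prodMk hb.1)
  have hb_int : IntegrableOn (uncurry b) (univ ×ˢ closedBall 0 R)
      ((volume.restrict (Ioo 0 T)).prod volume) := by
    rw [IntegrableOn, ← Measure.prod_restrict, Measure.restrict_univ, Measure.prod_restrict]
    exact (hb.2 R).mono_set (prod_mono Ioo_subset_Icc_self Subset.rfl)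
  rw [← integrableOn_iff_integrable_of_support_subset hsupp]
  refine (hb_int.norm.const_mul K).mono' hmeas.aestronglyMeasurable (.of_forall fun p => ?_)
  exact (fderiv ℝ φ p.2).le_of_opNorm_le (hK p.2) _

lemma SolvesContinuityEquation.measure_comp (hb : BorelLocIntegrable b T) {ρ : Measure Ω}
    [IsFiniteMeasure ρ] {κ : Kernel (ℝ × Ω) E} [IsSFiniteKernel κ] {C : ℝ≥0}
    (hC : ∀ t ∈ Ioo 0 T, κ.sectR t ∘ₘ ρ ≤ C • volume)
    (hκ : ∀ᵐ ω ∂ρ, SolvesContinuityEquation b T fun t => κ (t, ω)) :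
    SolvesContinuityEquation b T fun t => κ.sectR t ∘ₘ ρ := by
  have := FiniteDimensional.proper ℝ E
  intro φ hφ hφs ψ hψ hψs hψT
  let τ : Measure ℝ := volume.restrict (Ioo 0 T)
  replace hC : ∀ᵐ t ∂τ, κ.sectR t ∘ₘ ρ ≤ C • volume :=
    (ae_restrict_mem measurableSet_Ioo).mono hC
  let A (p : ℝ × Ω) : ℝ := ∫ x, φ x ∂(κ p)
  let B (p : ℝ × Ω) : ℝ := ∫ x, fderiv ℝ φ x (b p.1 x) ∂(κ p)
  have hφ_int : Integrable (fun p : ℝ × E => φ p.2) (τ.prod volume) :=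
    (hφ.continuous.integrable_of_hasCompactSupport hφs).comp_snd τ
  have hφb_int := hb.integrable_fderiv_apply (hφ.of_le (by simp)) hφs
  have hA : Integrable A (τ.prod ρ) := integrable_integral_kernel_of_ae_comp_le hC hφ_int
  have hB : Integrable B (τ.prod ρ) := integrable_integral_kernel_of_ae_comp_le hC hφb_int
  have mul_integrable {θ : ℝ → ℝ} (hθ : Continuous θ) (hθs : HasCompactSupport θ)
      {H : ℝ × Ω → ℝ} (hH : Integrable H (τ.prod ρ)) :
      Integrable (fun p => θ p.1 * H p) (τ.prod ρ) := by
    obtain ⟨K, hK⟩ := hθ.bounded_above_of_compact_support hθs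
    exact hH.bdd_mul (hθ.measurable.comp measurable_fst).aestronglyMeasurable
      (.of_forall fun p => hK p.1)
  have hG : Integrable (fun p => deriv ψ p.1 * A p + ψ p.1 * B p) (τ.prod ρ) :=
    (mul_integrable (hψ.continuous_deriv (by simp)) hψs.deriv hA).add
      (mul_integrable hψ.continuous hψs hB)
  calc ∫ t, (deriv ψ t * ∫ x, φ x ∂(κ.sectR t ∘ₘ ρ) +
          ψ t * ∫ x, fderiv ℝ φ x (b t x) ∂(κ.sectR t ∘ₘ ρ)) ∂τ
      = ∫ t, ∫ ω, (deriv ψ t * A (t, ω) + ψ t * B (t, ω)) ∂ρ ∂τ := by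
        refine integral_congr_ae ?_
        filter_upwards [ae_integral_comp_eq_of_ae_comp_le hC hφ_int,
          ae_integral_comp_eq_of_ae_comp_le hC hφb_int, hA.prod_right_ae, hB.prod_right_ae]
          with t hφt hφbt hAt hBt
        rw [hφt, hφbt, integral_add (hAt.const_mul _) (hBt.const_mul _), integral_const_mul,
          integral_const_mul]
    _ = ∫ ω, ∫ t, (deriv ψ t * A (t, ω) + ψ t * B (t, ω)) ∂τ ∂ρ := integral_integral_swap hG
    _ = 0 := integral_eq_zero_of_ae (hκ.mono fun ω hω => hω φ hφ hφs ψ hψ hψs hψT)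

end ContinuityEquation

section MeasureFlow

lemma WeaklyContinuous.vaguelyContinuous {E : Type*} [NormedAddCommGroup E] [MeasureSpace E]
    {T : ℝ} {μ : ℝ → Measure E} (hμ : WeaklyContinuous T μ) :
    VaguelyContinuous fun t : Icc 0 T => μ t :=
  fun φ hφ hφs => continuousOn_iff_continuous_domRestrict.1 (hμ φ hφ hφs)

namespace IsMeasureRLF

variable {b : ℝ → E → E} {T : ℝ} {ν : Measure (ProbabilityMeasure E)}
  {M M₁ M₂ : ℝ → ProbabilityMeasure E → ProbabilityMeasure E}

lemma ae_eq_self (h : IsMeasureRLF b T ν M) : M 0 =ᵐ[ν] id :=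
  h.1.mono fun _ hμ => hμ.1

lemma ae_weaklyContinuous (h : IsMeasureRLF b T ν M) :
    ∀ᵐ μ ∂ν, WeaklyContinuous T fun t => (M t μ : Measure E) :=
  h.1.mono fun _ hμ => hμ.2.2.1

lemma ae_vaguelyContinuous (h : IsMeasureRLF b T ν M) :
    ∀ᵐ μ ∂ν, VaguelyContinuous fun t : Icc 0 T => (M t μ : Measure E) :=
  h.ae_weaklyContinuous.mono fun _ hμ => hμ.vaguelyContinuous

lemma ae_solvesContinuityEquation (h : IsMeasureRLF b T ν M) :
    ∀ᵐ μ ∂ν, SolvesContinuityEquation b T fun t => (M t μ : Measure E) :=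
  h.1.mono fun _ hμ => hμ.2.2.2

lemma restrict (h : IsMeasureRLF b T ν M) (A : Set (ProbabilityMeasure E)) :
    IsMeasureRLF b T (ν.restrict A) M := by
  obtain ⟨hae, hmeas, C, hC⟩ := h
  refine ⟨ae_restrict_of_ae hae, fun t ht => (hmeas t ht).restrict, C, fun t ht => ?_⟩
  exact (expectation_mono (Measure.map_mono_of_aemeasurable Measure.restrict_le_self
    (hmeas t ht))).trans (hC t ht)

lemma isRegularOnP (h : IsMeasureRLF b T ν M) (hT : 0 ≤ T) : IsRegularOnP ν := by
  obtain ⟨C, hC⟩ := h.2.2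
  refine ⟨C, ?_⟩
  simpa only [Measure.map_congr h.ae_eq_self, Measure.map_id] using hC 0 (left_mem_Icc.2 hT)

lemma sigmaFinite [SigmaFinite (volume : Measure E)] (h : IsMeasureRLF b T ν M) (hT : 0 ≤ T) :
    SigmaFinite ν := by
  obtain ⟨C, hC⟩ := h.isRegularOnP hT
  have : SigmaFinite (expectation ν) := Measure.sigmaFinite_of_le _ hC
  exact sigmaFinite_of_sigmaFinite_expectation

section FiniteMeasure

variable [IsFiniteMeasure ν]

lemma inL1LinftyClass_mixture (h : IsMeasureRLF b T ν M) :
    InL1LinftyClass T fun t => mixture ν (M t) := by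
  obtain ⟨C, hC⟩ := h.2.2
  refine ⟨max C (ν univ).toNNReal, fun t ht => ⟨?_, (hC t ht).trans ?_⟩⟩
  · rw [mixture_univ (h.2.1 t ht), ENNReal.coe_max, ENNReal.coe_toNNReal (measure_ne_top _ _)]
    exact le_max_right _ _
  · gcongr
    exact le_max_left _ _

variable [BorelSpace E]

lemma weaklyContinuous_mixture (h : IsMeasureRLF b T ν M) :
    WeaklyContinuous T fun t => mixture ν (M t) := by
  intro φ hφ hφs
  obtain ⟨K, hK⟩ := hφ.bounded_above_of_compact_support hφs
  have hφ_meas : StronglyMeasurable φ := hφ.stronglyMeasurable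
  have integral_eq : ∀ t ∈ Icc 0 T,
      ∫ x, φ x ∂(mixture ν (M t)) = ∫ μ, ∫ x, φ x ∂(M t μ : Measure E) ∂ν := fun t ht =>
    have := isFiniteMeasure_mixture (h.2.1 t ht)
    integral_mixture (h.2.1 t ht) hφ_meas (hφ.integrable_of_hasCompactSupport hφs)
  refine ContinuousOn.congr ?_ integral_eq
  refine continuousOn_of_dominated (bound := fun _ => K) (fun t ht => ?_) (fun t _ => ?_)
    (integrable_const K) (h.ae_weaklyContinuous.mono fun μ hμ => hμ φ hφ hφs)
  · exact ((stronglyMeasurable_integral_probabilityMeasure hφ_meas).measurable.comp_aemeasurable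
      (h.2.1 t ht)).aestronglyMeasurable
  · exact .of_forall fun μ => by
      simpa using norm_integral_le_of_norm_le_const (μ := (M t μ : Measure E)) (.of_forall hK)

variable [FiniteDimensional ℝ E] [IsLocallyFiniteMeasure (volume : Measure E)]

lemma solvesContinuityEquation_mixture (h : IsMeasureRLF b T ν M) (hT : 0 ≤ T)
    (hb : BorelLocIntegrable b T) : SolvesContinuityEquation b T fun t => mixture ν (M t) := by
  have := FiniteDimensional.proper ℝ E
  -- Freezing the flow outside `[0, T]` makes it vaguely continuous on all of `ℝ`.
  let π (t : ℝ) : Icc 0 T := projIcc 0 T hT t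
  have hπ {t : ℝ} (ht : t ∈ Ioo 0 T) : (π t : ℝ) = t :=
    congrArg Subtype.val (projIcc_of_mem hT (Ioo_subset_Icc_self ht))
  obtain ⟨κ, hκ_markov, hκ⟩ := exists_isMarkovKernel_ae_eq (m := fun t => M (π t))
    (h.ae_vaguelyContinuous.mono fun μ hμ => hμ.comp continuous_projIcc)
    (fun t => h.2.1 _ (π t).2)
  have hκ_comp : ∀ t ∈ Ioo 0 T, κ.sectR t ∘ₘ ν = mixture ν (M t) := by
    intro t ht
    rw [mixture_eq_bind (h.2.1 t (Ioo_subset_Icc_self ht))]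
    refine Measure.bind_congr_right (hκ.mono fun μ hμ => ?_)
    rw [Kernel.sectR_apply, hμ, hπ ht]
  obtain ⟨C, hC⟩ := h.2.2
  refine (SolvesContinuityEquation.measure_comp hb (κ := κ) (ρ := ν) (C := C) (fun t ht => ?_)
    ?_).congr hκ_comp
  · exact (hκ_comp t ht).trans_le (hC t (Ioo_subset_Icc_self ht))
  · filter_upwards [h.ae_solvesContinuityEquation, hκ] with μ hμ hκμ
    exact hμ.congr fun t ht => by rw [hκμ, hπ ht]

lemma mixture_eq (h₁ : IsMeasureRLF b T ν M₁) (h₂ : IsMeasureRLF b T ν M₂)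
    (hb : BorelLocIntegrable b T) (huniq : CEUniqueness b T) {t : ℝ} (ht : t ∈ Icc 0 T) :
    mixture ν (M₁ t) = mixture ν (M₂ t) := by
  have hT : 0 ≤ T := ht.1.trans ht.2
  have h_init : mixture ν (M₁ 0) = mixture ν (M₂ 0) :=
    mixture_congr (h₁.ae_eq_self.trans h₂.ae_eq_self.symm)
  exact huniq _ _ h₁.inL1LinftyClass_mixture h₂.inL1LinftyClass_mixture
    h₁.weaklyContinuous_mixture h₂.weaklyContinuous_mixture
    (h₁.solvesContinuityEquation_mixture hT hb)
    (h₂.solvesContinuityEquation_mixture hT hb) h_init t ht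

lemma ae_eq_of_isFiniteMeasure (h₁ : IsMeasureRLF b T ν M₁) (h₂ : IsMeasureRLF b T ν M₂)
    (hb : BorelLocIntegrable b T) (huniq : CEUniqueness b T) {t : ℝ} (ht : t ∈ Icc 0 T) :
    M₁ t =ᵐ[ν] M₂ t :=
  have := FiniteDimensional.proper ℝ E
  ae_eq_of_forall_mixture_restrict_eq (h₁.2.1 t ht) (h₂.2.1 t ht) fun A _ =>
    (h₁.restrict A).mixture_eq (h₂.restrict A) hb huniq ht

end FiniteMeasure

end IsMeasureRLF

end MeasureFlow

theorem uniqueness_of_nu_RLF_on_P_general [FiniteDimensional ℝ E] [BorelSpace E]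
    [IsLocallyFiniteMeasure (volume : Measure E)] {T : ℝ} (hT : 0 ≤ T) {b : ℝ → E → E}
    (hb : BorelLocIntegrable b T) (huniq : CEUniqueness b T)
    {ν : Measure (ProbabilityMeasure E)}
    {M₁ M₂ : ℝ → ProbabilityMeasure E → ProbabilityMeasure E}
    (h₁ : IsMeasureRLF b T ν M₁) (h₂ : IsMeasureRLF b T ν M₂) :
    ∀ᵐ μ ∂ν, ∀ t ∈ Icc 0 T, M₁ t μ = M₂ t μ := by
  have := FiniteDimensional.proper ℝ E
  have := h₁.sigmaFinite hT
  have h_ae_eq (t : Icc 0 T) : M₁ t =ᵐ[ν] M₂ t :=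
    ae_of_forall_measure_lt_top_ae_restrict _ fun A _ hA =>
      have : IsFiniteMeasure (ν.restrict A) := ⟨by simpa using hA⟩
      (h₁.restrict A).ae_eq_of_isFiniteMeasure (h₂.restrict A) hb huniq t.2
  simpa only [Subtype.forall] using
    ae_forall_eq_of_forall_ae_eq h₁.ae_vaguelyContinuous h₂.ae_vaguelyContinuous h_ae_eq

/-- Uniqueness of the `𝛎`-RLF in `P(ℝ^d)`.
If the continuity equation has uniqueness in `L∞₊([0,T]; L¹ ∩ L∞)`, then for every regular
nonnegative σ-finite measure `𝛎` on `P(ℝ^d)` there is at most one `𝛎`-RLF in `P(ℝ^d)`: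
any two of them coincide, for `𝛎`-a.e. `μ`, at every time `t ∈ [0,T]`. -/
theorem uniqueness_of_nu_RLF_on_P {d : ℕ} (T : ℝ) (hT : 0 < T)
    (b : ℝ → EuclideanSpace ℝ (Fin d) → EuclideanSpace ℝ (Fin d))
    (hb : BorelLocIntegrable b T)
    (huniq : CEUniqueness b T)
    (ν : Measure (ProbabilityMeasure (EuclideanSpace ℝ (Fin d))))
    [SigmaFinite ν] (hreg : IsRegularOnP ν)
    (M₁ M₂ : ℝ → ProbabilityMeasure (EuclideanSpace ℝ (Fin d)) →
      ProbabilityMeasure (EuclideanSpace ℝ (Fin d)))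
    (h₁ : IsMeasureRLF b T ν M₁) (h₂ : IsMeasureRLF b T ν M₂) :
    ∀ᵐ μ ∂ν, ∀ t ∈ Icc 0 T, M₁ t μ = M₂ t μ := by
  exact uniqueness_of_nu_RLF_on_P_general hT.le hb huniq h₁ h₂

end
end
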